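/- Let A be the adjacency matrix of an undirected circulant graph on N vertices with generating set S, positive weights (d_s)_{s∈S}, degree d per node and adjacency bandwidth B̃, let k ≥ 1, set B = k·B̃ (the bandwidth of the order-2k HGSWT filters), and assume 2B < N. Let H_LP = (1/2^k)(I + A/d)^k and H_HP = (1/2^k)(I − A/d)^k, and let W′ ∈ ℝ^{N×N} be the matrix realizing the 'minimum' downsampling pattern: row 0 of W′ is row 0 of H_LP (a single node retains the low-pass component) and row i of W′ is row i of H_HP for 1 ≤ i ≤ N−1. Then for every polynomial p of degree at most 2k−1, the graph signal x with x_j = p(j) has a representation W′x with at most K = 2B nonzero entries. -/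

import Mathlib

/-- The symmetric circulant adjacency matrix of the circulant graph on `N` vertices
with generating set `S` and weights `w`. -/
noncomputable def circAdj (N : ℕ) (S : Finset ℕ) (w : ℕ → ℝ) :
    Matrix (Fin N) (Fin N) ℝ :=
  fun i j => ∑ s ∈ S,
    if ((i : ℤ) - (j : ℤ)) % (N : ℤ) = (s : ℤ) % (N : ℤ) ∨
       ((i : ℤ) - (j : ℤ)) % (N : ℤ) = (-(s : ℤ)) % (N : ℤ)
    then w s else 0

open Polynomial in
/-- The forward difference `p(X + r) - p(X)` has smaller degree than `p`. -/
lemma taylor_sub_self_mem_degreeLT (r : ℝ) {p : ℝ[X]} {n : ℕ}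
    (hp : p ∈ degreeLT ℝ (n + 1)) : taylor r p - p ∈ degreeLT ℝ n := by
  rw [mem_degreeLT] at hp ⊢
  by_cases h0 : p = 0
  · simp [h0]
  have hlt : (taylor r p - p).degree < (taylor r p).degree :=
    degree_sub_lt_left (degree_taylor p r) (by simpa using h0) (by simp)
  rw [degree_taylor] at hlt
  refine hlt.trans_le ?_
  rw [degree_eq_natDegree h0] at hp ⊢
  norm_cast at hp ⊢
  omega

open Polynomial in
/-- The central second difference lowers the degree by two. -/
lemma taylor_add_taylor_neg_mem_degreeLT (r : ℝ) {p : ℝ[X]} {n : ℕ}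
    (hp : p ∈ degreeLT ℝ (n + 2)) :
    taylor r p + taylor (-r) p - 2 • p ∈ degreeLT ℝ n := by
  have hq : taylor (-r) p ∈ degreeLT ℝ (n + 2) := by
    rw [mem_degreeLT] at hp ⊢
    rwa [degree_taylor]
  convert taylor_sub_self_mem_degreeLT r (taylor_sub_self_mem_degreeLT r hq) using 1
  simp only [map_sub, taylor_taylor]
  simp only [add_neg_cancel, taylor_zero, two_smul]
  simp
  ring

open Polynomial in
/-- The polynomial counterpart of the random-walk Laplacian `1 - A / d`, ignoring wrap-around. -/
noncomputable def polyLaplacian (S : Finset ℕ) (w : ℕ → ℝ) (p : ℝ[X]) : ℝ[X] :=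
  p - (∑ s ∈ S, 2 * w s)⁻¹ • ∑ s ∈ S, w s • (taylor (s : ℝ) p + taylor (-(s : ℝ)) p)

open Polynomial in
lemma polyLaplacian_mem_degreeLT {S : Finset ℕ} {w : ℕ → ℝ} (hd : ∑ s ∈ S, 2 * w s ≠ 0)
    {p : ℝ[X]} {n : ℕ} (hp : p ∈ degreeLT ℝ (n + 2)) :
    polyLaplacian S w p ∈ degreeLT ℝ n := by
  have heq : polyLaplacian S w p = -((∑ s ∈ S, 2 * w s)⁻¹ •
      ∑ s ∈ S, w s • (taylor (s : ℝ) p + taylor (-(s : ℝ)) p - 2 • p)) := by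
    have hsum : ∑ s ∈ S, w s • (2 • p) = (∑ s ∈ S, 2 * w s) • p := by
      rw [Finset.sum_smul]
      refine Finset.sum_congr rfl fun s _ => ?_
      rw [mul_comm, ← smul_smul, two_smul, two_smul]
    simp only [smul_sub (w _), Finset.sum_sub_distrib, hsum]
    rw [smul_sub, smul_smul, inv_mul_cancel₀ hd, one_smul, neg_sub, polyLaplacian]
  rw [heq]
  exact neg_mem (Submodule.smul_mem _ _ (sum_mem fun s _ =>
    Submodule.smul_mem _ _ (taylor_add_taylor_neg_mem_degreeLT _ hp)))

open Polynomial in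
lemma polyLaplacian_iterate_eq_zero {S : Finset ℕ} {w : ℕ → ℝ}
    (hd : ∑ s ∈ S, 2 * w s ≠ 0) (k : ℕ) {p : ℝ[X]} (hp : p ∈ degreeLT ℝ (2 * k)) :
    (polyLaplacian S w)^[k] p = 0 := by
  induction k generalizing p with
  | zero => simpa [mem_degreeLT, Polynomial.degree_lt_iff_coeff_zero, Polynomial.ext_iff] using hp
  | succ k ih =>
    rw [Function.iterate_succ_apply]
    exact ih (polyLaplacian_mem_degreeLT hd (by simpa [mul_add] using hp))

/-- Away from the boundary, the circulant adjacency matrix acts without wrap-around. -/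
lemma circAdj_mulVec_apply {N : ℕ} {S : Finset ℕ} (w : ℕ → ℝ) {b : ℕ}
    (hpos : ∀ s ∈ S, 1 ≤ s) (hle : ∀ s ∈ S, s ≤ b) (y : Fin N → ℝ) (f : ℝ → ℝ) (i : Fin N)
    (hbi : b ≤ i) (hib : i + b < N)
    (hy : ∀ j : Fin N, (i : ℕ) ≤ j + b → (j : ℕ) ≤ i + b → y j = f (j : ℕ)) :
    (circAdj N S w).mulVec y i =
      ∑ s ∈ S, w s * (f ((i : ℕ) + (s : ℝ)) + f ((i : ℕ) + -(s : ℝ))) := by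
  simp only [Matrix.mulVec, dotProduct, circAdj, Finset.sum_mul]
  rw [Finset.sum_comm]
  refine Finset.sum_congr rfl fun s hs => ?_
  have h1 := hpos s hs
  have h2 := hle s hs
  have hi := i.isLt
  let u : Fin N := ⟨i + s, by omega⟩
  let v : Fin N := ⟨i - s, by omega⟩
  have huv : u ≠ v := by
    simp only [u, v, ne_eq, Fin.mk.injEq]
    omega
  have hcond : ∀ j : Fin N,
      (((i : ℤ) - (j : ℤ)) % (N : ℤ) = (s : ℤ) % (N : ℤ) ∨
        ((i : ℤ) - (j : ℤ)) % (N : ℤ) = (-(s : ℤ)) % (N : ℤ)) ↔ j = u ∨ j = v := by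
    intro j
    have hj := j.isLt
    have hdvd : ∀ a c : ℕ, a < N → c < N → ((N : ℤ) ∣ (a : ℤ) - c ↔ c = a) := by
      intro a c ha hc
      refine ⟨fun h => ?_, fun h => by simp [h]⟩
      have := Int.eq_zero_of_abs_lt_dvd h (by rw [abs_lt]; omega)
      omega
    rw [Int.emod_eq_emod_iff_emod_sub_eq_zero, Int.emod_eq_emod_iff_emod_sub_eq_zero,
      ← Int.dvd_iff_emod_eq_zero, ← Int.dvd_iff_emod_eq_zero, Fin.ext_iff, Fin.ext_iff,
      ← hdvd u j u.isLt hj, ← hdvd v j v.isLt hj, or_comm]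
    have hu : (i : ℤ) - j - -(s : ℤ) = (u : ℕ) - (j : ℕ) := by simp only [u]; push_cast; ring
    have hv : (i : ℤ) - j - (s : ℤ) = (v : ℕ) - (j : ℕ) := by simp only [v]; omega
    rw [hu, hv]
  have hyu : y u = f ((i : ℕ) + (s : ℝ)) := by
    rw [hy u (by simp only [u]; omega) (by simp only [u]; omega)]
    simp [u]
  have hyv : y v = f ((i : ℕ) + -(s : ℝ)) := by
    rw [hy v (by simp only [v]; omega) (by simp only [v]; omega)]
    simp only [v]
    rw [Nat.cast_sub (by omega), sub_eq_add_neg]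
  simp only [hcond, ite_mul, zero_mul]
  rw [← Finset.sum_filter, show Finset.univ.filter (fun j => j = u ∨ j = v) = {u, v} by
    ext j; simp, Finset.sum_pair huv, hyu, hyv, mul_add]

open Polynomial in
/-- If `y` samples `q` at distance at least `r` from the boundary, then `(1 - A / d) y` samples
`polyLaplacian S w q` at distance at least `r + b`. -/
lemma one_sub_circAdj_mulVec_apply {N : ℕ} {S : Finset ℕ} (w : ℕ → ℝ) {b : ℕ}
    (hpos : ∀ s ∈ S, 1 ≤ s) (hle : ∀ s ∈ S, s ≤ b) (y : Fin N → ℝ) (q : ℝ[X]) (r : ℕ)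
    (hy : ∀ j : Fin N, r ≤ j → j + r < N → y j = q.eval ((j : ℕ) : ℝ))
    (i : Fin N) (hri : r + b ≤ i) (hir : i + (r + b) < N) :
    (1 - (∑ s ∈ S, 2 * w s)⁻¹ • circAdj N S w).mulVec y i =
      (polyLaplacian S w q).eval ((i : ℕ) : ℝ) := by
  rw [Matrix.sub_mulVec, Matrix.one_mulVec, Matrix.smul_mulVec, Pi.sub_apply, Pi.smul_apply,
    circAdj_mulVec_apply w hpos hle y (fun t => q.eval t) i (by omega) (by omega)
      (fun j _ _ => hy j (by omega) (by omega)), hy i (by omega) (by omega)]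
  simp [polyLaplacian, eval_finsetSum, taylor_eval, mul_add]

open Polynomial in
lemma one_sub_circAdj_pow_mulVec_apply {N : ℕ} {S : Finset ℕ} (w : ℕ → ℝ) {b : ℕ}
    (hpos : ∀ s ∈ S, 1 ≤ s) (hle : ∀ s ∈ S, s ≤ b) (x : Fin N → ℝ) (p : ℝ[X])
    (hx : ∀ j : Fin N, x j = p.eval ((j : ℕ) : ℝ)) (m : ℕ)
    (i : Fin N) (hmi : m * b ≤ i) (him : i + m * b < N) :
    ((1 - (∑ s ∈ S, 2 * w s)⁻¹ • circAdj N S w) ^ m).mulVec x i =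
      ((polyLaplacian S w)^[m] p).eval ((i : ℕ) : ℝ) := by
  induction m generalizing i with
  | zero => simpa using hx i
  | succ m ih =>
    rw [add_one_mul] at hmi him
    rw [pow_succ', ← Matrix.mulVec_mulVec, Function.iterate_succ_apply']
    exact one_sub_circAdj_mulVec_apply w hpos hle _ _ (m * b) ih i hmi him

/-- At most `2 * B` vertices lie within distance `B` of the boundary. -/
lemma card_filter_boundary_le {N : ℕ} (B : ℕ) :
    (Finset.univ.filter fun a : Fin N => (a : ℕ) < B ∨ N ≤ a + B).card ≤ 2 * B := by
  rw [← Finset.card_map Fin.valEmbedding]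
  calc _ ≤ (Finset.range B ∪ Finset.Ico (N - B) N).card := by
        refine Finset.card_le_card fun a ha => ?_
        simp only [Finset.mem_map, Finset.mem_filter, Finset.mem_univ, true_and,
          Fin.valEmbedding_apply] at ha
        obtain ⟨c, hc, rfl⟩ := ha
        simp only [Finset.mem_union, Finset.mem_range, Finset.mem_Ico]
        omega
    _ ≤ _ := by
        refine (Finset.card_union_le _ _).trans ?_
        simp only [Finset.card_range, Nat.card_Ico]
        omega

/-- with the `minimum` downsampling pattern (one low-pass row, all other
rows high-pass), the HGSWT representation of a polynomial graph signal of degree at most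
`2k−1` has at most `K = 2B = 2kB̃` nonzero entries. -/
theorem hgswt_minimum_sampling_sparsity
    (N : ℕ) (S : Finset ℕ) (w : ℕ → ℝ)
    (hS : ∀ s ∈ S, 1 ≤ s ∧ 2 * s ≤ N - 1)
    (hw : ∀ s ∈ S, 0 < w s) (hSne : S.Nonempty)
    (Bt : ℕ) (hBS : Bt ∈ S) (hBmax : ∀ s ∈ S, s ≤ Bt)
    (k : ℕ) (hk : 1 ≤ k) (hB : 2 * (k * Bt) < N)
    (A : Matrix (Fin N) (Fin N) ℝ) (hA : A = circAdj N S w)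
    (HLP HHP : Matrix (Fin N) (Fin N) ℝ)
    (hHLP : HLP = (1 / 2 ^ k : ℝ) •
      ((1 : Matrix (Fin N) (Fin N) ℝ) + (∑ s ∈ S, 2 * w s)⁻¹ • A) ^ k)
    (hHHP : HHP = (1 / 2 ^ k : ℝ) •
      ((1 : Matrix (Fin N) (Fin N) ℝ) - (∑ s ∈ S, 2 * w s)⁻¹ • A) ^ k)
    (W' : Matrix (Fin N) (Fin N) ℝ)
    (hW' : ∀ a b : Fin N, W' a b = if (a : ℕ) = 0 then HLP a b else HHP a b)
    (p : Polynomial ℝ) (hp : p.natDegree ≤ 2 * k - 1)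
    (x : Fin N → ℝ) (hx : ∀ j : Fin N, x j = p.eval ((j : ℕ) : ℝ)) :
    (Finset.univ.filter fun a => W'.mulVec x a ≠ 0).card ≤ 2 * (k * Bt) := by
  subst hA
  have hpos : ∀ s ∈ S, 1 ≤ s := fun s hs => (hS s hs).1
  have hd : ∑ s ∈ S, 2 * w s ≠ 0 :=
    (Finset.sum_pos (fun s hs => mul_pos two_pos (hw s hs)) hSne).ne'
  have hB1 : 1 ≤ k * Bt := Nat.mul_pos hk (hpos Bt hBS)
  have hpmem : p ∈ Polynomial.degreeLT ℝ (2 * k) := by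
    rw [Polynomial.mem_degreeLT]
    exact Polynomial.degree_le_natDegree.trans_lt (by norm_cast; omega)
  refine (Finset.card_le_card fun a ha => ?_).trans (card_filter_boundary_le (k * Bt))
  simp only [Finset.mem_filter, Finset.mem_univ, true_and] at ha ⊢
  by_contra! hcon
  refine ha ?_
  have hrow : W'.mulVec x a = HHP.mulVec x a := by
    simp only [Matrix.mulVec, dotProduct]
    refine Finset.sum_congr rfl fun c _ => ?_
    rw [hW', if_neg (by omega)]
  rw [hrow, hHHP, Matrix.smul_mulVec, Pi.smul_apply,
    one_sub_circAdj_pow_mulVec_apply w hpos hBmax x p hx k a hcon.1 hcon.2,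
    polyLaplacian_iterate_eq_zero hd k hpmem]
  simp
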